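/- For every n with 1 ≤ n ≤ 4, there exists a unitary error basis (U_k), k = 1,…,n², on ℂⁿ that is equivariant under the full symmetric group acting by permutation matrices: for every σ ∈ S_n there is a permutation τ_σ of the index set {1,…,n²} such that P_σ · U_k · P_σ† = U_{τ_σ(k)} for all k, where P_σ is the permutation matrix of σ. -/

import Mathlib

/-!
For `n ≤ 4` the symmetric group `S_n` has a normal subgroup `N` acting regularly on the `n` points:
the cyclic group for `n ≤ 3` and the Klein four-group for `n = 4`. Take a complex number `ζ` with
`|ζ| = 1` and `2 Re ζ = 2 - n`, which exists exactly because `n ≤ 4` (for `n = 1` any `ζ` with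
`|ζ| = 1` will do), and let `D_j` be the diagonal matrix with `ζ` in position `j` and `1` elsewhere.
The basis consists of the products `P_ν D_j` with `ν ∈ N`.

* Different `ν` give matrices with disjoint supports, as `N` acts regularly, and for the same `ν`
  the inner product is `Tr(D_i† D_j) = n - 2 + ζ + conj ζ = 0` when `i ≠ j`.
* Conjugation by `P_σ` sends `P_ν D_j` to `P_{σνσ⁻¹} D_{σ j}`, again a member as `N` is normal.
-/

open Matrix

/-- The monomial matrix `P_{m k} D_j`, where `m k` is a map of the `n` points to themselves and
`D_j` is diagonal with `ζ` in position `j` and `1` elsewhere. -/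
noncomputable def monomialUEB {n : ℕ} (ζ : ℂ) (m : Fin n → Fin n → Fin n) (p : Fin n × Fin n) :
    Matrix (Fin n) (Fin n) ℂ :=
  Matrix.of fun a b => if a = m p.1 b then (if b = p.2 then ζ else 1) else 0

/-- `Tr(D_i† D_j)` for the diagonal matrices `D_j`. -/
lemma sum_diag_inner {n : ℕ} (ζ : ℂ) (hζ : star ζ * ζ = 1) (hre : 1 < n → ζ + star ζ + n = 2)
    (i j : Fin n) :
    ∑ b, star (if b = i then ζ else 1) * (if b = j then ζ else 1) =
      if i = j then (n : ℂ) else 0 := by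
  split_ifs with h
  · subst h
    rw [Finset.sum_congr rfl (g := fun _ => (1 : ℂ))]
    · simp
    · intro b _
      split_ifs
      · exact hζ
      · simp
  · have hn : 1 < n := by
      by_contra hn
      apply h
      ext
      omega
    -- since `i ≠ j`, each term is `1` plus the corrections at `b = i` and at `b = j`
    have : ∀ b, star (if b = i then ζ else 1) * (if b = j then ζ else 1) =
        1 + (if b = i then star ζ - 1 else 0) + (if b = j then ζ - 1 else 0) := by
      intro b
      by_cases h1 : b = i
      · have h2 : b ≠ j := fun h2 => h (h1.symm.trans h2)
        simp [h1, h]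
      · by_cases h2 : b = j <;> simp [h1, h2, Ne.symm h]
    rw [Finset.sum_congr rfl fun b _ => this b]
    simp only [Finset.sum_add_distrib, Finset.sum_ite_eq', Finset.mem_univ, if_true]
    simp only [Finset.sum_const, Finset.card_univ, Fintype.card_fin, nsmul_eq_mul, mul_one]
    linear_combination hre hn

/-- The construction for a set of permutations `m k` that acts regularly (`hinj`, `hfree`) and is
stable under conjugation (`hnorm`). -/
lemma exists_ueb_of_regular {n : ℕ} (ζ : ℂ) (hζ : star ζ * ζ = 1)
    (hre : 1 < n → ζ + star ζ + n = 2) (m : Fin n → Fin n → Fin n)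
    (hinj : ∀ k a b, m k a = m k b → a = b)
    (hfree : ∀ k l b, m k b = m l b → k = l)
    (hnorm : ∀ (σ : Equiv.Perm (Fin n)) (k : Fin n), ∃ l, ∀ b, σ (m k b) = m l (σ b)) :
    ∃ U : Fin (n ^ 2) → Matrix (Fin n) (Fin n) ℂ,
      (∀ k, U k ∈ Matrix.unitaryGroup (Fin n) ℂ) ∧
      (∀ i j, Matrix.trace ((U i)ᴴ * U j) = if i = j then (n : ℂ) else 0) ∧
      (∀ σ : Equiv.Perm (Fin n), ∃ τ : Equiv.Perm (Fin (n ^ 2)), ∀ k,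
        (Matrix.of (fun a b => if a = σ b then (1 : ℂ) else 0)) * U k *
          (Matrix.of (fun a b => if a = σ b then (1 : ℂ) else 0))ᴴ = U (τ k)) := by
  let e : Fin (n ^ 2) ≃ Fin n × Fin n := (finCongr (sq n)).trans finProdFinEquiv.symm
  refine ⟨fun x => monomialUEB ζ m (e x), ?_, ?_, ?_⟩
  · intro x
    rw [Matrix.mem_unitaryGroup_iff', star_eq_conjTranspose]
    ext a b
    simp only [monomialUEB, Matrix.mul_apply, conjTranspose_apply, of_apply, mul_ite, mul_zero,
      Finset.sum_ite_eq', Finset.mem_univ, if_true, one_apply]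
    by_cases h : a = b
    · subst h
      by_cases h' : a = (e x).2
      · simpa [h'] using hζ
      · simp [h']
    · have : m (e x).1 b ≠ m (e x).1 a := fun h' => h (hinj _ _ _ h').symm
      simp [h, this]
  · intro x y
    simp only [Matrix.trace, Matrix.diag, monomialUEB, Matrix.mul_apply, conjTranspose_apply,
      of_apply, mul_ite, mul_zero, Finset.sum_ite_eq', Finset.mem_univ, if_true]
    by_cases h : (e x).1 = (e y).1
    · have hxy : x = y ↔ (e x).2 = (e y).2 :=
        ⟨fun h => by rw [h], fun h' => e.injective (Prod.ext h h')⟩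
      simp only [hxy, ← sum_diag_inner ζ hζ hre]
      refine Finset.sum_congr rfl fun b _ => ?_
      simp [h]
    · have hxy : x ≠ y := fun h' => h (by rw [h'])
      rw [if_neg hxy]
      refine Finset.sum_eq_zero fun b _ => ?_
      have : m (e y).1 b ≠ m (e x).1 b := fun h' => h (hfree _ _ _ h').symm
      simp [this]
  · intro σ
    choose f hf using hnorm σ
    have hfinj : Function.Injective (fun p : Fin n × Fin n => (f p.1, σ p.2)) := by
      rintro ⟨k, i⟩ ⟨l, j⟩ h
      obtain ⟨h1, h2⟩ := Prod.mk.inj h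
      refine Prod.ext (hfree _ _ i (σ.injective ?_)) (σ.injective h2)
      rw [hf, hf, h1]
    let t : Equiv.Perm (Fin n × Fin n) :=
      Equiv.ofBijective _ (Finite.injective_iff_bijective.mp hfinj)
    refine ⟨(e.trans t).trans e.symm, fun x => ?_⟩
    have ht : e (((e.trans t).trans e.symm) x) = (f (e x).1, σ (e x).2) := by
      simp [t]
    ext a b
    obtain ⟨a, rfl⟩ := σ.surjective a
    obtain ⟨b, rfl⟩ := σ.surjective b
    beta_reduce
    rw [ht]
    simp [monomialUEB, Matrix.mul_apply, ← hf]
    split_ifs <;> rfl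

open Matrix

/-- For 1 ≤ n ≤ 4, there is a unitary error basis on ℂⁿ equivariant under the full
symmetric group acting by permutation matrices. -/
theorem stmt_15 (n : ℕ) (hn1 : 1 ≤ n) (hn4 : n ≤ 4) :
    ∃ U : Fin (n ^ 2) → Matrix (Fin n) (Fin n) ℂ,
      (∀ k, U k ∈ Matrix.unitaryGroup (Fin n) ℂ) ∧
      (∀ i j, Matrix.trace ((U i)ᴴ * U j) = if i = j then (n : ℂ) else 0) ∧
      (∀ σ : Equiv.Perm (Fin n), ∃ τ : Equiv.Perm (Fin (n ^ 2)), ∀ k,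
        (Matrix.of (fun a b => if a = σ b then (1 : ℂ) else 0)) * U k *
          (Matrix.of (fun a b => if a = σ b then (1 : ℂ) else 0))ᴴ = U (τ k)) := by
  interval_cases n
  · exact exists_ueb_of_regular 1 (by simp) (by simp) (fun k b => b + k)
      (by decide) (by decide) (by decide)
  · exact exists_ueb_of_regular Complex.I (by simp) (by simp) (fun k b => b + k)
      (by decide) (by decide) (by decide)
  · -- `ζ` is a primitive cube root of unity
    refine exists_ueb_of_regular ⟨-1 / 2, √3 / 2⟩ ?_ ?_ (fun k b => b + k)
      (by decide) (by decide) (by decide)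
    · have h3 : √3 * √3 = 3 := Real.mul_self_sqrt (by norm_num)
      apply Complex.ext
      · simp
        linarith
      · simp
        ring
    · intro _
      apply Complex.ext <;> norm_num
  · -- bitwise exclusive or is the action of the Klein four-group on itself
    exact exists_ueb_of_regular (-1) (by simp) (by norm_num) (fun k b => k ^^^ b)
      (by decide) (by decide) (by decide +kernel)
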